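/- Let S be a real symmetric d×d matrix of full rank with exactly m positive eigenvalues. For a function f: ℝ^d → ℝ∪{+∞}, the following are equivalent: (a) for every Borel probability measure μ on ℝ^d with finite support, ∫f dμ ≥ ½S(b,b) where b := ∫x dμ; (b) the closed convex hull of f satisfies (clconv f)(x) ≥ ½S(x,x) for all x ∈ ℝ^d; (c) there exists a maximal S-monotone set G such that f ≥ ψ_G pointwise. -/

import Mathlib

/-!
Write `q(x) = S(x,x)/2` and `ℓ_z(y) = S(z,y) - q(z) = q(y) - q(y - z)` for the tangent of `q`
at `z`, so that `ψ_G = sup_{z ∈ G} ℓ_z`.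

(a) ⇔ (b): (a) says that `conv f ≥ q`, and since `q` is continuous this survives passing to the
lower limit (`le_eclconv_iff`).

(c) ⇒ (a): `ψ_G ≥ q` for every maximal `S`-monotone `G`, because a point `y` with `ψ_G(y) < q(y)`
could be added to `G` (`MaxSMono.le_fitz`). If moreover `ψ_G ≤ f`, each affine function `ℓ_z`,
`z ∈ G`, lies below `f`, and integrating gives `ψ_G(b) ≤ μ(f)` at the barycenter `b` of `μ`.

(a) ⇒ (c): by (a) the convex hull of the epigraph of `f` lies in `{(x, r) : q(x) ≤ r}`. Zorn's lemma
gives a maximal convex set `C` between the two (`IsMaxEpi`), and `G = {x : (x, q(x)) ∈ C}` is the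
required set.
* Points of `C` lie above `ℓ_x` for `x ∈ G` (`IsMaxEpi.tangent_le`); hence `G` is monotone and
  `ψ_G ≤ f`. Conversely, if all of `C` lies above `ℓ_z`, then the point `(z, q(z))` can be joined
  to `C`, so `z ∈ G` (`IsMaxEpi.mem_of_tangent_le`).
* By Sylvester's law of inertia, we may assume that `q(x) = ⟪J x, x⟫ / 2` on a Euclidean space, with
  `J` a symmetric involution (`exists_signature_equiv`). Then every `z` admits a `v` with `J v = -v`
  and `z + v ∈ G` (`IsMaxEpi.exists_mem_neg`). For `z = 0`, let `(x₀, a)` minimize the strongly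
  convex function `r + |x|²/2` on `C`. The first-order condition says that `C` lies above
  `ℓ_w + |x₀ + J x₀|²/2`, where `w = -J x₀`; so `w ∈ G`, and evaluating at `w` yields
  `x₀ + J x₀ = 0`.
* If `z` is monotonically related to all of `G`, this `v` satisfies `0 ≤ 2 q(v) = -|v|²`,
  so `v = 0` and `z ∈ G`: thus `G` is maximal.
-/

open MeasureTheory Filter Set Matrix

noncomputable section

/-- The bilinear form of the matrix `S`: `S(x,y) = ⟨x, Sy⟩`. -/
def Sb {d : ℕ} (S : Matrix (Fin d) (Fin d) ℝ) (x y : Fin d → ℝ) : ℝ :=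
  x ⬝ᵥ S.mulVec y

/-- A set `G` is `S`-monotone if `S(x-y,x-y) ≥ 0` for all `x, y ∈ G`. -/
def SMono {d : ℕ} (S : Matrix (Fin d) (Fin d) ℝ) (G : Set (Fin d → ℝ)) : Prop :=
  ∀ x ∈ G, ∀ y ∈ G, 0 ≤ Sb S (x - y) (x - y)

/-- Maximal `S`-monotone set. -/
def MaxSMono {d : ℕ} (S : Matrix (Fin d) (Fin d) ℝ) (G : Set (Fin d → ℝ)) : Prop :=
  SMono S G ∧ ∀ H, SMono S H → G ⊆ H → H = G

/-- The Fitzpatrick function `ψ_G(y) = sup_{x∈G} (S(x,y) - S(x,x)/2)`, with values in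
`ℝ ∪ {+∞}` (modeled in `EReal`). -/
def fitz {d : ℕ} (S : Matrix (Fin d) (Fin d) ℝ) (G : Set (Fin d → ℝ))
    (y : Fin d → ℝ) : EReal :=
  ⨆ x ∈ G, ((Sb S x y - Sb S x x / 2 : ℝ) : EReal)

/-- Positive part of an extended real number, in `ℝ≥0∞`. -/
def epos (x : EReal) : ENNReal := if x = ⊤ then ⊤ else ENNReal.ofReal x.toReal

/-- Integral of an `EReal`-valued function: positive part minus negative part. -/
def eInt {α : Type*} [MeasurableSpace α] (μ : Measure α) (f : α → EReal) : EReal :=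
  ((∫⁻ a, epos (f a) ∂μ : ENNReal) : EReal) - ((∫⁻ a, epos (-(f a)) ∂μ : ENNReal) : EReal)

/-- The martingale property of a measure `γ(dx,dy)` on `ℝ^d × ℝ^d`: the conditional
expectation of `y` given `x` equals `x`, `γ`-a.s. -/
def MartProp {d : ℕ} (γ : Measure ((Fin d → ℝ) × (Fin d → ℝ))) : Prop :=
  γ[(fun p => p.2) | MeasurableSpace.comap Prod.fst inferInstance] =ᵐ[γ] fun p => p.1

/-- `γ ∈ Γ(ν)`: probability measures on `ℝ^d × ℝ^d` with finite second moment,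
`y`-marginal `ν` and the martingale property. -/
def MGamma {d : ℕ} (ν : Measure (Fin d → ℝ))
    (γ : Measure ((Fin d → ℝ) × (Fin d → ℝ))) : Prop :=
  IsProbabilityMeasure γ ∧ γ.map Prod.snd = ν ∧
    Integrable (fun p => ‖p.1‖ ^ 2 + ‖p.2‖ ^ 2) γ ∧ MartProp γ

/-- Value of the primal problem: `(1/2) ∫ S(x,y) dγ`. -/
def primalVal {d : ℕ} (S : Matrix (Fin d) (Fin d) ℝ)
    (γ : Measure ((Fin d → ℝ) × (Fin d → ℝ))) : ℝ :=
  (1 / 2) * ∫ p, Sb S p.1 p.2 ∂γ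

/-- `γ` is an optimal plan for the primal problem. -/
def PrimalOpt {d : ℕ} (S : Matrix (Fin d) (Fin d) ℝ) (ν : Measure (Fin d → ℝ))
    (γ : Measure ((Fin d → ℝ) × (Fin d → ℝ))) : Prop :=
  MGamma ν γ ∧ ∀ γ', MGamma ν γ' → primalVal S γ' ≤ primalVal S γ

/-- `G` is an optimal set for the dual problem: minimize `∫ ψ_G dν` over maximal
`S`-monotone sets. -/
def DualOpt {d : ℕ} (S : Matrix (Fin d) (Fin d) ℝ) (ν : Measure (Fin d → ℝ))
    (G : Set (Fin d → ℝ)) : Prop :=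
  MaxSMono S G ∧ ∀ H, MaxSMono S H → eInt ν (fitz S G) ≤ eInt ν (fitz S H)

/-- The support of a measure: points all of whose neighborhoods have positive measure. -/
def msupp {α : Type*} [TopologicalSpace α] [MeasurableSpace α] (μ : Measure α) : Set α :=
  {x | ∀ U ∈ nhds x, μ U ≠ 0}

/-- The `S`-projection on `G`: minimizers over `G` of `z ↦ S(z-y,z-y)`. -/
def SProj {d : ℕ} (S : Matrix (Fin d) (Fin d) ℝ) (G : Set (Fin d → ℝ))
    (y : Fin d → ℝ) : Set (Fin d → ℝ) :=
  {x ∈ G | ∀ z ∈ G, Sb S (x - y) (x - y) ≤ Sb S (z - y) (z - y)}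

/-- The inverse image of the projection: `P_G^{-1}(x) = {y : x ∈ P_G(y)}`. -/
def SProjInv {d : ℕ} (S : Matrix (Fin d) (Fin d) ℝ) (G : Set (Fin d → ℝ))
    (x : Fin d → ℝ) : Set (Fin d → ℝ) :=
  {y | x ∈ SProj S G y}

/-- `Q_G(x) = ∪_{n ≥ 1} Q_G^{1/n}(x)`, where
`Q_G^ε(x) = {y ∈ P_G^{-1}(x) : x + ε (x - y) ∈ P_G^{-1}(x)}`. -/
def QG {d : ℕ} (S : Matrix (Fin d) (Fin d) ℝ) (G : Set (Fin d → ℝ))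
    (x : Fin d → ℝ) : Set (Fin d → ℝ) :=
  ⋃ n : ℕ, {y ∈ SProjInv S G x |
    x + ((1 : ℝ) / (n + 1)) • (x - y) ∈ SProjInv S G x}


/-- Convexity of an `EReal`-valued function on `ℝ^d`. -/
def EConvexOn {d : ℕ} (f : (Fin d → ℝ) → EReal) : Prop :=
  ∀ x y : Fin d → ℝ, ∀ t : ℝ, 0 < t → t < 1 →
    f (t • x + (1 - t) • y) ≤ (t : EReal) * f x + ((1 - t : ℝ) : EReal) * f y

/-- The convex conjugate of an `EReal`-valued function on `ℝ^d`. -/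
def econj {d : ℕ} (f : (Fin d → ℝ) → EReal) (y : Fin d → ℝ) : EReal :=
  ⨆ x : Fin d → ℝ, (((y ⬝ᵥ x : ℝ) : EReal) - f x)

/-- The subdifferential of an `EReal`-valued function on `ℝ^d`:
`∂f(x) = {z : f(y) - f(x) ≥ ⟨z, y - x⟩ for all y}`. -/
def esubdiff {d : ℕ} (f : (Fin d → ℝ) → EReal) (x : Fin d → ℝ) : Set (Fin d → ℝ) :=
  {z | ∀ y : Fin d → ℝ, ((z ⬝ᵥ (y - x) : ℝ) : EReal) ≤ f y - f x}

/-- The expected value `μ(f)` of an `EReal`-valued function under a finitely supported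
probability measure, given by weights `p` and atoms `xs`. -/
def wsum {d : ℕ} {n : ℕ} (p : Fin n → ℝ) (xs : Fin n → (Fin d → ℝ))
    (f : (Fin d → ℝ) → EReal) : EReal :=
  ∑ i : Fin n, ((p i : EReal) * f (xs i))

/-- The convex hull of an `EReal`-valued function `f`:
`conv f(y) = inf {μ(f) : μ finitely supported probability measure with mean y}`. -/
def econvHull {d : ℕ} (f : (Fin d → ℝ) → EReal) (y : Fin d → ℝ) : EReal :=
  ⨅ (n : ℕ) (p : Fin n → ℝ) (xs : Fin n → (Fin d → ℝ))
    (_ : ∀ i, 0 ≤ p i) (_ : ∑ i, p i = 1) (_ : ∑ i, p i • xs i = y),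
    wsum p xs f

/-- The closed convex hull of an `EReal`-valued function `f`:
`clconv f(x) = liminf_{y → x} conv f(y)`. -/
def eclconv {d : ℕ} (f : (Fin d → ℝ) → EReal) (x : Fin d → ℝ) : EReal :=
  Filter.liminf (econvHull f) (nhds x)

section Fitz

open scoped RealInnerProductSpace

/-! ### Maximal convex sets above an indefinite quadratic form -/

section Hilbert

variable {H : Type*} [NormedAddCommGroup H] [InnerProductSpace ℝ H]

/-- The quadratic form `q(x) = ⟪J x, x⟫ / 2` of an operator `J`. -/
def indefQ (J : H →L[ℝ] H) (x : H) : ℝ := ⟪J x, x⟫ / 2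

/-- The affine function `ℓ_z(y) = ⟪J z, y⟫ - q(z)`, the tangent to `q` at `z` when `J` is
symmetric. -/
def tangentQ (J : H →L[ℝ] H) (z y : H) : ℝ := ⟪J z, y⟫ - indefQ J z

/-- `C` is maximal among the convex subsets of `{(x, r) : q(x) ≤ r}`. Such a set plays the role of
the epigraph of a minimal convex function above `q`. -/
structure IsMaxEpi (J : H →L[ℝ] H) (C : Set (H × ℝ)) : Prop where
  convex : Convex ℝ C
  above : ∀ p ∈ C, indefQ J p.1 ≤ p.2
  max : ∀ D : Set (H × ℝ), Convex ℝ D → (∀ p ∈ D, indefQ J p.1 ≤ p.2) → C ⊆ D → D ⊆ C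

variable {J : H →L[ℝ] H}

lemma inner_map_comm (hJ : ∀ x y, ⟪J x, y⟫ = ⟪x, J y⟫) (x y : H) : ⟪J x, y⟫ = ⟪J y, x⟫ := by
  rw [hJ, real_inner_comm]

lemma continuous_indefQ : Continuous (indefQ J) := by
  unfold indefQ; fun_prop

lemma indefQ_eq_tangentQ_add (hJ : ∀ x y, ⟪J x, y⟫ = ⟪x, J y⟫) (z y : H) :
    indefQ J y = tangentQ J z y + indefQ J (y - z) := by
  have := inner_map_comm hJ y z
  simp only [indefQ, tangentQ, map_sub, inner_sub_left, inner_sub_right]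
  linarith

lemma indefQ_segment (hJ : ∀ x y, ⟪J x, y⟫ = ⟪x, J y⟫) (x y : H) (t : ℝ) :
    indefQ J ((1 - t) • x + t • y)
      = (1 - t) * indefQ J x + t * indefQ J y - t * (1 - t) * indefQ J (y - x) := by
  have := inner_map_comm hJ y x
  simp only [indefQ, map_sub, map_add, map_smul, inner_sub_left, inner_sub_right, inner_add_left,
    inner_add_right, real_inner_smul_left, real_inner_smul_right, this]
  ring

lemma exists_isMaxEpi {C₀ : Set (H × ℝ)} (h₀ : Convex ℝ C₀)
    (hq : ∀ p ∈ C₀, indefQ J p.1 ≤ p.2) : ∃ C, C₀ ⊆ C ∧ IsMaxEpi J C := by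
  obtain ⟨C, hC, hmax⟩ := zorn_subset_nonempty
    {C : Set (H × ℝ) | Convex ℝ C ∧ ∀ p ∈ C, indefQ J p.1 ≤ p.2}
    (fun c hc hchain _ => ⟨⋃₀ c,
      ⟨hchain.directedOn.convex_sUnion fun A hA => (hc hA).1,
        fun p ⟨A, hA, hp⟩ => (hc hA).2 p hp⟩,
      fun A hA => subset_sUnion_of_mem hA⟩) C₀ ⟨h₀, hq⟩
  exact ⟨C, hC, hmax.prop.1, hmax.prop.2, fun D h1 h2 h3 => hmax.le_of_ge ⟨h1, h2⟩ h3⟩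

lemma IsMaxEpi.isClosed {C : Set (H × ℝ)} (hC : IsMaxEpi J C) : IsClosed C := by
  refine isClosed_of_closure_subset (hC.max _ hC.convex.closure ?_ subset_closure)
  have : IsClosed {p : H × ℝ | indefQ J p.1 ≤ p.2} :=
    isClosed_le (continuous_indefQ.comp continuous_fst) continuous_snd
  exact fun p hp => closure_minimal (s := C) (fun p hp => hC.above p hp) this hp

/-- A convex set above `q` that touches the graph of `q` at `x` lies above the tangent there: divide
the inequality along the segment from `(x, q(x))` to `p` by its parameter `t`, and let `t → 0`. -/
lemma IsMaxEpi.tangent_le (hJ : ∀ x y, ⟪J x, y⟫ = ⟪x, J y⟫) {C : Set (H × ℝ)}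
    (hC : IsMaxEpi J C) {x : H} (hx : (x, indefQ J x) ∈ C) {p : H × ℝ} (hp : p ∈ C) :
    tangentQ J x p.1 ≤ p.2 := by
  have key : ∀ t : ℝ, 0 < t → t ≤ 1 → 0 ≤ p.2 - indefQ J p.1 + (1 - t) * indefQ J (p.1 - x) := by
    intro t h0 h1
    have h := hC.above _ (hC.convex hx hp (sub_nonneg.2 h1) h0.le (by ring))
    simp only [Prod.fst_add, Prod.smul_fst, Prod.snd_add, Prod.smul_snd, smul_eq_mul] at h
    rw [indefQ_segment hJ] at h
    have : 0 ≤ t * (p.2 - indefQ J p.1 + (1 - t) * indefQ J (p.1 - x)) := by linarith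
    exact nonneg_of_mul_nonneg_right this h0
  have hlim : Tendsto (fun t : ℝ => p.2 - indefQ J p.1 + (1 - t) * indefQ J (p.1 - x))
      (nhdsWithin 0 (Ioi 0)) (nhds (p.2 - indefQ J p.1 + (1 - 0) * indefQ J (p.1 - x))) :=
    (Continuous.tendsto (by fun_prop) 0).mono_left nhdsWithin_le_nhds
  have h := ge_of_tendsto hlim (by
    filter_upwards [Ioc_mem_nhdsGT (zero_lt_one' ℝ)] with t ht using key t ht.1 ht.2)
  have := indefQ_eq_tangentQ_add hJ x p.1
  linarith

/-- If `C` lies above `ℓ_z`, then the convex hull of `C` and `(z, q(z))` still lies above `q`, so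
maximality puts `(z, q(z))` in `C`. -/
lemma IsMaxEpi.mem_of_tangent_le (hJ : ∀ x y, ⟪J x, y⟫ = ⟪x, J y⟫) {C : Set (H × ℝ)}
    (hC : IsMaxEpi J C) {z : H} (hz : ∀ p ∈ C, tangentQ J z p.1 ≤ p.2) :
    (z, indefQ J z) ∈ C := by
  refine hC.max (convexHull ℝ (insert (z, indefQ J z) C)) (convex_convexHull _ _) ?_
    ((subset_insert _ _).trans (subset_convexHull _ _))
    (subset_convexHull _ _ (mem_insert _ _))
  rcases C.eq_empty_or_nonempty with rfl | hne
  · simp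
  rw [convexHull_insert hne, hC.convex.convexHull_eq]
  intro p hp
  obtain ⟨a, rfl, b, hb, u, v, hu, hv, huv, rfl⟩ := mem_convexJoin.1 hp
  obtain rfl : u = 1 - v := by linarith
  simp only [Prod.fst_add, Prod.smul_fst, Prod.snd_add, Prod.smul_snd, smul_eq_mul]
  rw [indefQ_segment hJ]
  have h1 := hz b hb
  have h2 := hC.above b hb
  have h3 := indefQ_eq_tangentQ_add hJ z b.1
  nlinarith [mul_nonneg hv (mul_nonneg hu (sub_nonneg.2 h1)),
    mul_nonneg (mul_nonneg hv hv) (sub_nonneg.2 h2)]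

/-- The function `(x, r) ↦ r + ‖x‖²/2` attains its minimum on a closed convex set where it is
nonnegative: by the parallelogram law, the first components of a minimizing sequence are Cauchy. -/
lemma exists_forall_le_add_sq [CompleteSpace H] {C : Set (H × ℝ)} (hc : Convex ℝ C)
    (hcl : IsClosed C) (hne : C.Nonempty) (hb : ∀ p ∈ C, 0 ≤ p.2 + ‖p.1‖ ^ 2 / 2) :
    ∃ p ∈ C, ∀ p' ∈ C, p.2 + ‖p.1‖ ^ 2 / 2 ≤ p'.2 + ‖p'.1‖ ^ 2 / 2 := by
  set φ : H × ℝ → ℝ := fun p => p.2 + ‖p.1‖ ^ 2 / 2 with hφ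
  have hφc : Continuous φ := by fun_prop
  set c := sInf (φ '' C) with hcdef
  have hbdd : BddBelow (φ '' C) := ⟨0, by rintro _ ⟨p, hp, rfl⟩; exact hb p hp⟩
  have hcle : ∀ p ∈ C, c ≤ φ p := fun p hp => csInf_le hbdd ⟨p, hp, rfl⟩
  have hseq : ∀ n : ℕ, ∃ p ∈ C, φ p < c + 1 / (n + 1) := fun n => by
    obtain ⟨_, ⟨p, hp, rfl⟩, h⟩ := exists_lt_of_csInf_lt (hne.image φ)
      (show sInf (φ '' C) < c + 1 / ((n : ℝ) + 1) by
        have : (0 : ℝ) < 1 / ((n : ℝ) + 1) := by positivity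
        linarith)
    exact ⟨p, hp, h⟩
  choose u hu hlt using hseq
  have hmid : ∀ p ∈ C, ∀ p' ∈ C, ‖p.1 - p'.1‖ ^ 2 ≤ 4 * (φ p + φ p' - 2 * c) := by
    intro p hp p' hp'
    have h := hcle _ (hc hp hp' (a := 1 / 2) (b := 1 / 2) (by norm_num) (by norm_num)
      (by norm_num))
    simp only [hφ, Prod.fst_add, Prod.smul_fst, Prod.snd_add, Prod.smul_snd, smul_eq_mul,
      ← smul_add, norm_smul, mul_pow] at h ⊢
    have := parallelogram_law_with_norm ℝ p.1 p'.1
    norm_num at h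
    nlinarith
  have hb0 : Tendsto (fun N : ℕ => (1 : ℝ) / ((N : ℝ) + 1)) atTop (nhds 0) :=
    tendsto_one_div_add_atTop_nhds_zero_nat
  have hcauchy : CauchySeq (fun n => (u n).1) := by
    refine cauchySeq_of_le_tendsto_0 (fun N : ℕ => √(8 * (1 / ((N : ℝ) + 1)))) ?_ ?_
    · intro n m N hn hm
      rw [dist_eq_norm]
      refine Real.le_sqrt_of_sq_le ((hmid _ (hu n) _ (hu m)).trans ?_)
      have e1 : (1 : ℝ) / (n + 1) ≤ 1 / (N + 1) := Nat.one_div_le_one_div hn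
      have e2 : (1 : ℝ) / (m + 1) ≤ 1 / (N + 1) := Nat.one_div_le_one_div hm
      linarith [hlt n, hlt m]
    · have := (hb0.const_mul 8).sqrt
      simpa using this
  obtain ⟨x, hx⟩ := cauchySeq_tendsto_of_complete hcauchy
  have hφlim : Tendsto (fun n => φ (u n)) atTop (nhds c) :=
    tendsto_of_tendsto_of_tendsto_of_le_of_le tendsto_const_nhds
      (by simpa using hb0.const_add c) (fun n => hcle _ (hu n)) (fun n => (hlt n).le)
  have hsnd : Tendsto (fun n => (u n).2) atTop (nhds (c - ‖x‖ ^ 2 / 2)) := by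
    have := hφlim.sub (((hx.norm).pow 2).div_const 2)
    simpa [hφ] using this
  refine ⟨(x, c - ‖x‖ ^ 2 / 2),
    hcl.mem_of_tendsto (hx.prodMk_nhds hsnd) (Eventually.of_forall hu), fun p' hp' => ?_⟩
  simpa using hcle p' hp'

/-- First-order condition at a minimizer `p` of `(x, r) ↦ r + ‖x‖²/2`. -/
lemma sub_inner_le_of_forall_le_add_sq {C : Set (H × ℝ)} (hc : Convex ℝ C) {p : H × ℝ}
    (hp : p ∈ C) (hmin : ∀ p' ∈ C, p.2 + ‖p.1‖ ^ 2 / 2 ≤ p'.2 + ‖p'.1‖ ^ 2 / 2)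
    {p' : H × ℝ} (hp' : p' ∈ C) : p.2 - ⟪p.1, p'.1 - p.1⟫ ≤ p'.2 := by
  have key : ∀ t : ℝ, 0 < t → t ≤ 1 →
      0 ≤ p'.2 - p.2 + ⟪p.1, p'.1 - p.1⟫ + t * (‖p'.1 - p.1‖ ^ 2 / 2) := by
    intro t h0 h1
    have h := hmin _ (hc hp hp' (sub_nonneg.2 h1) h0.le (by ring))
    have e : (1 - t) • p.1 + t • p'.1 = p.1 + t • (p'.1 - p.1) := by module
    simp only [Prod.fst_add, Prod.smul_fst, Prod.snd_add, Prod.smul_snd, smul_eq_mul] at h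
    rw [e, norm_add_sq_real, norm_smul, mul_pow, real_inner_smul_right, Real.norm_eq_abs,
      sq_abs] at h
    have : 0 ≤ t * (p'.2 - p.2 + ⟪p.1, p'.1 - p.1⟫ + t * (‖p'.1 - p.1‖ ^ 2 / 2)) := by linarith
    exact nonneg_of_mul_nonneg_right this h0
  have hlim : Tendsto
      (fun t : ℝ => p'.2 - p.2 + ⟪p.1, p'.1 - p.1⟫ + t * (‖p'.1 - p.1‖ ^ 2 / 2))
      (nhdsWithin 0 (Ioi 0))
      (nhds (p'.2 - p.2 + ⟪p.1, p'.1 - p.1⟫ + 0 * (‖p'.1 - p.1‖ ^ 2 / 2))) :=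
    (Continuous.tendsto (by fun_prop) 0).mono_left nhdsWithin_le_nhds
  have h := ge_of_tendsto hlim (by
    filter_upwards [Ioc_mem_nhdsGT (zero_lt_one' ℝ)] with t ht using key t ht.1 ht.2)
  linarith

/-- From any `z`, the set `{x : (x, q(x)) ∈ C}` can be reached by moving along the `-1` eigenspace
of `J`. This is a version of Minty's theorem. -/
lemma IsMaxEpi.exists_mem_neg [CompleteSpace H] (hJ : ∀ x y, ⟪J x, y⟫ = ⟪x, J y⟫)
    (hJJ : ∀ x, J (J x) = x) {C : Set (H × ℝ)} (hC : IsMaxEpi J C) (z : H) :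
    ∃ v, J v = -v ∧ (z + v, indefQ J (z + v)) ∈ C := by
  have hadd : ∀ v, indefQ J (z + v) = indefQ J v + ⟪J z, v⟫ + indefQ J z := fun v => by
    have := indefQ_eq_tangentQ_add hJ z (z + v)
    rw [this, add_sub_cancel_left, tangentQ, inner_add_right, indefQ]
    rw [indefQ]; ring
  -- `C'` is `C` shifted so that `z` becomes the origin and `ℓ_z` becomes `0`.
  set C' : Set (H × ℝ) := {p | (z + p.1, p.2 + ⟪J z, p.1⟫ + indefQ J z) ∈ C} with hC'
  have hshift : ∀ r ∈ C, (r.1 - z, r.2 - ⟪J z, r.1 - z⟫ - indefQ J z) ∈ C' := fun r hr => by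
    have e : (z + (r.1 - z), r.2 - ⟪J z, r.1 - z⟫ - indefQ J z + ⟪J z, r.1 - z⟫ + indefQ J z) = r :=
      Prod.ext (by simp) (by simp only; ring)
    change (z + (r.1 - z), _) ∈ C
    rwa [e]
  have hne : C'.Nonempty := by
    have : C.Nonempty := by
      by_contra h
      rw [not_nonempty_iff_eq_empty] at h
      have := hC.mem_of_tangent_le hJ (z := z) (by simp [h])
      simp [h] at this
    obtain ⟨p, hp⟩ := this
    exact ⟨_, hshift p hp⟩
  have hcl : IsClosed C' := hC.isClosed.preimage (by fun_prop)
  have hcv : Convex ℝ C' := by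
    intro p hp p' hp' a b ha hb hab
    have := hC.convex hp hp' ha hb hab
    have e : (z + (a • p.1 + b • p'.1),
          a * p.2 + b * p'.2 + ⟪J z, a • p.1 + b • p'.1⟫ + indefQ J z)
        = a • (z + p.1, p.2 + ⟪J z, p.1⟫ + indefQ J z)
          + b • (z + p'.1, p'.2 + ⟪J z, p'.1⟫ + indefQ J z) := by
      refine Prod.ext ?_ ?_
      · change z + (a • p.1 + b • p'.1) = a • (z + p.1) + b • (z + p'.1)
        rw [smul_add, smul_add, add_add_add_comm, ← add_smul, hab, one_smul]
      · change a * p.2 + b * p'.2 + ⟪J z, a • p.1 + b • p'.1⟫ + indefQ J z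
          = a * (p.2 + ⟪J z, p.1⟫ + indefQ J z) + b * (p'.2 + ⟪J z, p'.1⟫ + indefQ J z)
        rw [inner_add_right, real_inner_smul_right, real_inner_smul_right]
        linear_combination (-indefQ J z) * hab
    rw [← e] at this
    exact this
  have hab : ∀ p ∈ C', indefQ J p.1 ≤ p.2 := fun p hp => by
    have := hC.above _ hp
    simp only [hadd] at this
    linarith
  have hsq : ∀ x : H, ‖x + J x‖ ^ 2 / 2 = 2 * indefQ J x + ‖x‖ ^ 2 := fun x => by
    have h1 : ‖J x‖ ^ 2 = ‖x‖ ^ 2 := by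
      rw [← real_inner_self_eq_norm_sq, ← real_inner_self_eq_norm_sq, hJ, hJJ]
    rw [norm_add_sq_real, h1, indefQ, real_inner_comm x (J x)]
    ring
  obtain ⟨p, hp, hmin⟩ := exists_forall_le_add_sq hcv hcl hne (fun p hp => by
    have := hsq p.1
    have := hab p hp
    have := sq_nonneg ‖p.1 + J p.1‖
    linarith)
  -- `w` is chosen so that `⟪J w, ·⟫ = -⟪p.1, ·⟫` is the slope from the first-order condition.
  set w := -J p.1 with hw
  have hJw : J w = -p.1 := by rw [hw, map_neg, hJJ]
  have hqw : indefQ J w = indefQ J p.1 := by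
    rw [indefQ, hJw, hw, inner_neg_neg, indefQ, real_inner_comm]
  have hsub : ∀ p' ∈ C', ⟪J w, p'.1⟫ - indefQ J w + ‖p.1 + J p.1‖ ^ 2 / 2 ≤ p'.2 := by
    intro p' hp'
    have h := sub_inner_le_of_forall_le_add_sq hcv hp hmin hp'
    have h2 := hab p hp
    rw [hsq, hqw, hJw, inner_neg_left]
    rw [inner_sub_right, real_inner_self_eq_norm_sq] at h
    linarith
  have hmem : (z + w, indefQ J (z + w)) ∈ C := by
    refine hC.mem_of_tangent_le hJ fun r hr => ?_
    have h := hsub _ (hshift r hr)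
    have h3 := sq_nonneg ‖p.1 + J p.1‖
    have h4 := inner_map_comm hJ w z
    have h6 : ⟪J z, z⟫ = 2 * indefQ J z := by rw [indefQ]; ring
    simp only [tangentQ, hadd, map_add, inner_add_left, inner_sub_right] at h ⊢
    linarith
  have hw' : (w, indefQ J w) ∈ C' := by
    simpa only [hC', mem_ofPred_eq, ← hadd] using hmem
  have hzero : ‖p.1 + J p.1‖ ^ 2 / 2 ≤ 0 := by
    have h := hsub _ hw'
    have h6 : ⟪J w, w⟫ = 2 * indefQ J w := by rw [indefQ]; ring
    simp only [h6] at h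
    linarith
  have hz : p.1 + J p.1 = 0 := by
    have : ‖p.1 + J p.1‖ ^ 2 = 0 := le_antisymm (by linarith) (sq_nonneg _)
    simpa using this
  refine ⟨w, ?_, hmem⟩
  rw [hJw, hw, neg_neg]
  exact neg_eq_of_add_eq_zero_right hz

/-- The set `{x : (x, q(x)) ∈ C}` contains every point monotonically related to all of its
elements. -/
lemma IsMaxEpi.mem_of_monotone [CompleteSpace H] (hJ : ∀ x y, ⟪J x, y⟫ = ⟪x, J y⟫)
    (hJJ : ∀ x, J (J x) = x) {C : Set (H × ℝ)} (hC : IsMaxEpi J C) {z : H}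
    (hz : ∀ x, (x, indefQ J x) ∈ C → 0 ≤ indefQ J (x - z)) : (z, indefQ J z) ∈ C := by
  obtain ⟨v, hv, hmem⟩ := hC.exists_mem_neg hJ hJJ z
  have h := hz _ hmem
  rw [add_sub_cancel_left, indefQ, hv, inner_neg_left, real_inner_self_eq_norm_sq] at h
  have h0 : ‖v‖ ^ 2 = 0 := le_antisymm (by linarith) (sq_nonneg _)
  obtain rfl : v = 0 := by simpa using h0
  simpa using hmem

end Hilbert

/-! ### Normal form of the matrix `S` -/

section Matrix

variable {d : ℕ} {S : Matrix (Fin d) (Fin d) ℝ}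

lemma Sb_eq_toBilin' (S : Matrix (Fin d) (Fin d) ℝ) (x y : Fin d → ℝ) :
    Sb S x y = Matrix.toBilin' S x y := by
  rw [Matrix.toBilin'_apply', Sb]

lemma Sb_comm (hS : S.IsHermitian) (x y : Fin d → ℝ) : Sb S x y = Sb S y x := by
  have hS' : Sᵀ = S := by simpa [Matrix.IsHermitian] using hS
  rw [Sb, Sb, Matrix.dotProduct_mulVec, ← Matrix.mulVec_transpose, hS', dotProduct_comm]

lemma Sb_affine_identity (hS : S.IsHermitian) (x y : Fin d → ℝ) :
    Sb S x y - Sb S x x / 2 = Sb S y y / 2 - Sb S (y - x) (y - x) / 2 := by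
  have := Sb_comm hS x y
  simp only [Sb_eq_toBilin', map_sub, LinearMap.sub_apply] at this ⊢
  linarith

lemma continuous_Sb_self (S : Matrix (Fin d) (Fin d) ℝ) :
    Continuous fun x : Fin d → ℝ => Sb S x x / 2 := by
  simp only [Sb, dotProduct, Matrix.mulVec]
  fun_prop

/-- Sylvester's law of inertia: in suitable coordinates `S(x,x) = ⟪J x, x⟫` with `J` diagonal with
entries `±1`, hence a symmetric involution. -/
lemma exists_signature_equiv (hS : S.IsHermitian) (hdet : IsUnit S.det) :
    ∃ (n : ℕ) (J : EuclideanSpace ℝ (Fin n) →L[ℝ] EuclideanSpace ℝ (Fin n))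
      (T : (Fin d → ℝ) ≃ₗ[ℝ] EuclideanSpace ℝ (Fin n)),
      (∀ x y, ⟪J x, y⟫ = ⟪x, J y⟫) ∧ (∀ x, J (J x) = x) ∧
        ∀ x, Sb S x x / 2 = indefQ J (T x) := by
  set B := Matrix.toBilin' S
  have hass : QuadraticMap.associated (R := ℝ) B.toQuadraticMap = B :=
    QuadraticMap.associated_left_inverse ℝ fun x y => by
      rw [← Sb_eq_toBilin', ← Sb_eq_toBilin', Sb_comm hS]
  obtain ⟨w, hw, ⟨e⟩⟩ := QuadraticForm.equivalent_one_neg_one_weighted_sum_squared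
    B.toQuadraticMap (by
      rw [hass]
      exact Matrix.separatingLeft_toBilin'_iff.2
        (Matrix.nondegenerate_of_det_ne_zero hdet.ne_zero).1)
  have hw2 : ∀ i, w i * w i = 1 := fun i => by rcases hw i with h | h <;> simp [h]
  refine ⟨_, LinearMap.toContinuousLinearMap (Matrix.toEuclideanLin (Matrix.diagonal w)),
    e.toLinearEquiv.trans (WithLp.linearEquiv 2 ℝ _).symm, fun x y => ?_, fun x => ?_, fun x => ?_⟩
  · simp only [PiLp.inner_apply, LinearMap.coe_toContinuousLinearMap']
    refine Finset.sum_congr rfl fun i _ => ?_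
    simp [Matrix.toEuclideanLin, Matrix.mulVec_diagonal]
    ring
  · ext i
    simp [Matrix.toEuclideanLin, Matrix.mulVec_diagonal, ← mul_assoc, hw2]
  · have h := e.map_app x
    have h' : Sb S x x = QuadraticMap.weightedSumSquares ℝ w (e x) := by
      rw [h, Sb_eq_toBilin']; rfl
    rw [h', indefQ, QuadraticMap.weightedSumSquares_apply, PiLp.inner_apply]
    congr 1
    refine Finset.sum_congr rfl fun i _ => ?_
    simp [Matrix.toEuclideanLin, Matrix.mulVec_diagonal]
    ring

end Matrix

/-! ### Finitely supported measures and the closed convex hull -/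

section Extended

variable {d : ℕ}

lemma coe_sum_ereal {ι : Type*} (s : Finset ι) (a : ι → ℝ) :
    ((∑ i ∈ s, a i : ℝ) : EReal) = ∑ i ∈ s, (a i : EReal) := by
  classical
  induction s using Finset.induction_on with
  | empty => simp
  | insert i s hi ih => rw [Finset.sum_insert hi, Finset.sum_insert hi, EReal.coe_add, ih]

/-- An affine function below `f` satisfies `μ(f) ≥ L(b) - c` at the barycenter `b` of `μ`. -/
lemma affine_le_wsum {n : ℕ} {p : Fin n → ℝ} {xs : Fin n → Fin d → ℝ} {f : (Fin d → ℝ) → EReal}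
    (hp : ∀ i, 0 ≤ p i) (hp1 : ∑ i, p i = 1) (L : (Fin d → ℝ) →ₗ[ℝ] ℝ) (c : ℝ)
    (h : ∀ y, ((L y - c : ℝ) : EReal) ≤ f y) :
    ((L (∑ i, p i • xs i) - c : ℝ) : EReal) ≤ wsum p xs f := by
  have e : L (∑ i, p i • xs i) - c = ∑ i, p i * (L (xs i) - c) := by
    simp only [map_sum, map_smul, smul_eq_mul, mul_sub, Finset.sum_sub_distrib,
      ← Finset.sum_mul, hp1, one_mul]
  rw [e, coe_sum_ereal, wsum]
  refine Finset.sum_le_sum fun i _ => ?_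
  rw [EReal.coe_mul]
  exact mul_le_mul_of_nonneg_left (h _) (EReal.coe_nonneg.2 (hp i))

/-- The equivalence of (a) and (b). -/
lemma le_eclconv_iff (S : Matrix (Fin d) (Fin d) ℝ) (f : (Fin d → ℝ) → EReal) :
    (∀ (n : ℕ) (p : Fin n → ℝ) (xs : Fin n → (Fin d → ℝ)),
        (∀ i, 0 ≤ p i) → ∑ i, p i = 1 →
        ((Sb S (∑ i, p i • xs i) (∑ i, p i • xs i) / 2 : ℝ) : EReal) ≤ wsum p xs f) ↔
      (∀ x : Fin d → ℝ, ((Sb S x x / 2 : ℝ) : EReal) ≤ eclconv f x) := by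
  constructor
  · intro h x
    have hle : ∀ y, ((Sb S y y / 2 : ℝ) : EReal) ≤ econvHull f y := fun y => by
      simp only [econvHull, le_iInf_iff]
      rintro n p xs hp hp1 rfl
      exact h n p xs hp hp1
    have hlim : Tendsto (fun y : Fin d → ℝ => ((Sb S y y / 2 : ℝ) : EReal)) (nhds x)
        (nhds ((Sb S x x / 2 : ℝ) : EReal)) :=
      (continuous_coe_real_ereal.comp (continuous_Sb_self S)).tendsto x
    rw [← hlim.liminf_eq]
    exact liminf_le_liminf (Eventually.of_forall hle)
  · intro h n p xs hp hp1
    have h1 : eclconv f (∑ i, p i • xs i) ≤ econvHull f (∑ i, p i • xs i) :=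
      liminf_le_of_le (by isBoundedDefault) fun b hb => hb.self_of_nhds
    refine (h _).trans (h1.trans ?_)
    exact iInf_le_of_le n <| iInf_le_of_le p <| iInf_le_of_le xs <| iInf_le_of_le hp <|
      iInf_le_of_le hp1 <| iInf_le_of_le rfl le_rfl

end Extended

/-! ### Fitzpatrick functions of maximal monotone sets -/

variable {d : ℕ} {S : Matrix (Fin d) (Fin d) ℝ}

lemma MaxSMono.le_fitz (hS : S.IsHermitian) {G : Set (Fin d → ℝ)} (hG : MaxSMono S G)
    (y : Fin d → ℝ) : ((Sb S y y / 2 : ℝ) : EReal) ≤ fitz S G y := by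
  by_contra! hlt
  have hpos : ∀ x ∈ G, 0 < Sb S (y - x) (y - x) := fun x hx => by
    have h1 : ((Sb S x y - Sb S x x / 2 : ℝ) : EReal) ≤ fitz S G y :=
      le_iSup₂ (f := fun x (_ : x ∈ G) => ((Sb S x y - Sb S x x / 2 : ℝ) : EReal)) x hx
    have h2 := EReal.coe_lt_coe_iff.1 (h1.trans_lt hlt)
    rw [Sb_affine_identity hS] at h2
    linarith
  have hz : Sb S (y - y) (y - y) = 0 := by simp [Sb]
  have hins : SMono S (insert y G) := by
    rintro a (rfl | ha) b (rfl | hb)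
    · exact hz.ge
    · exact (hpos b hb).le
    · have := Sb_affine_identity hS a b
      have h2 := Sb_affine_identity hS b a
      have h3 := Sb_comm hS a b
      have := hpos a ha
      linarith
    · exact hG.1 a ha b hb
  have hy : y ∈ G := hG.2 _ hins (subset_insert _ _) ▸ mem_insert y G
  exact (hpos y hy).ne' hz

/-- The implication from (a) to (c), with `G = {x : (x, q(x)) ∈ C}` for a maximal convex set `C`
containing the epigraph of `f` and lying above `q`, in the coordinates of
`exists_signature_equiv`. -/
lemma exists_maxSMono_fitz_le (hS : S.IsHermitian) (hdet : IsUnit S.det)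
    {f : (Fin d → ℝ) → EReal} (hbot : ∀ x, f x ≠ ⊥)
    (hf : ∀ (n : ℕ) (p : Fin n → ℝ) (xs : Fin n → (Fin d → ℝ)),
        (∀ i, 0 ≤ p i) → ∑ i, p i = 1 →
        ((Sb S (∑ i, p i • xs i) (∑ i, p i • xs i) / 2 : ℝ) : EReal) ≤ wsum p xs f) :
    ∃ G, MaxSMono S G ∧ ∀ y, fitz S G y ≤ f y := by
  obtain ⟨n, J, T, hJ, hJJ, hT⟩ := exists_signature_equiv hS hdet
  set D : Set (EuclideanSpace ℝ (Fin n) × ℝ) := {p | f (T.symm p.1) ≤ (p.2 : EReal)} with hD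
  have hDq : ∀ p ∈ convexHull ℝ D, indefQ J p.1 ≤ p.2 := by
    intro p hp
    obtain ⟨ι, _, w, z, hw, hw1, hz, rfl⟩ := mem_convexHull_iff_exists_fintype.1 hp
    set σ := (Fintype.equivFin ι).symm
    have h := hf _ (fun i => w (σ i)) (fun i => T.symm (z (σ i)).1) (fun i => hw _)
      (by rw [← hw1]; exact σ.sum_comp w)
    have e : ∑ i, w (σ i) • T.symm (z (σ i)).1 = T.symm (∑ i, w i • z i).1 := by
      rw [σ.sum_comp fun i => w i • T.symm (z i).1]
      simp [Prod.fst_sum]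
    rw [e, hT, LinearEquiv.apply_symm_apply] at h
    refine EReal.coe_le_coe_iff.1 (h.trans ?_)
    rw [wsum, σ.sum_comp fun i => (w i : EReal) * f (T.symm (z i).1), Prod.snd_sum,
      coe_sum_ereal]
    refine Finset.sum_le_sum fun i _ => ?_
    rw [Prod.smul_snd, smul_eq_mul, EReal.coe_mul]
    exact mul_le_mul_of_nonneg_left (hz i) (EReal.coe_nonneg.2 (hw i))
  obtain ⟨C, hDC, hC⟩ := exists_isMaxEpi (convex_convexHull ℝ D) hDq
  have hT' : ∀ x y, Sb S (x - y) (x - y) / 2 = indefQ J (T x - T y) := fun x y => by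
    rw [hT, map_sub]
  have htan : ∀ x y, Sb S x y - Sb S x x / 2 = tangentQ J (T x) (T y) := fun x y => by
    have := indefQ_eq_tangentQ_add hJ (T x) (T y)
    rw [Sb_affine_identity hS, hT y, hT' y x]
    linarith
  refine ⟨{x | (T x, indefQ J (T x)) ∈ C}, ⟨fun x hx y hy => ?_, fun G' hG' hsub => ?_⟩,
    fun y => ?_⟩
  · have h1 := hC.tangent_le hJ hy hx
    have h2 := indefQ_eq_tangentQ_add hJ (T y) (T x)
    have h3 := hT' x y
    simp only at h1
    linarith
  · refine (Subset.antisymm hsub fun z hz => ?_).symm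
    refine hC.mem_of_monotone hJ hJJ fun x hx => ?_
    have h1 : T.symm x ∈ G' := hsub (by simpa using hx)
    have h2 := hG' _ h1 _ hz
    have h3 := hT' (T.symm x) z
    rw [LinearEquiv.apply_symm_apply] at h3
    linarith
  · refine iSup₂_le fun x hx => ?_
    induction hfy : f y with
    | bot => exact absurd hfy (hbot y)
    | top => exact le_top
    | coe r =>
      have hmem : (T y, r) ∈ C := hDC (subset_convexHull ℝ D (by simp [hD, hfy]))
      rw [htan]
      exact EReal.coe_le_coe_iff.2 (hC.tangent_le hJ hx hmem)

/-- The implication from (c) to (a). -/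
lemma le_wsum_of_fitz_le (hS : S.IsHermitian) {f : (Fin d → ℝ) → EReal} {G : Set (Fin d → ℝ)}
    (hG : MaxSMono S G) (hGf : ∀ y, fitz S G y ≤ f y) {n : ℕ} {p : Fin n → ℝ}
    {xs : Fin n → (Fin d → ℝ)} (hp : ∀ i, 0 ≤ p i) (hp1 : ∑ i, p i = 1) :
    ((Sb S (∑ i, p i • xs i) (∑ i, p i • xs i) / 2 : ℝ) : EReal) ≤ wsum p xs f := by
  refine (hG.le_fitz hS _).trans (iSup₂_le fun x hx => ?_)
  rw [Sb_eq_toBilin' S x]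
  refine affine_le_wsum hp hp1 (Matrix.toBilin' S x) (Sb S x x / 2) fun y => ?_
  rw [← Sb_eq_toBilin']
  exact (le_iSup₂ (f := fun x (_ : x ∈ G) => ((Sb S x y - Sb S x x / 2 : ℝ) : EReal)) x hx).trans
    (hGf y)

end Fitz

/-- Theorem 13: for `f : ℝ^d → ℝ ∪ {+∞}`, the following are
equivalent: (a) `μ(f) ≥ ½ S(μ(x), μ(x))` for every finitely supported probability
measure `μ`; (b) `clconv f(x) ≥ ½S(x,x)` for all `x`; (c) `f ≥ ψ_G` for some maximal
`S`-monotone set `G`. -/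
theorem minimality_of_fitzpatrick_functions
    (d m : ℕ) (S : Matrix (Fin d) (Fin d) ℝ) (hS : S.IsHermitian)
    (hrank : IsUnit S.det)
    (hm : Nat.card {i : Fin d // 0 < hS.eigenvalues i} = m)
    (f : (Fin d → ℝ) → EReal) (hbot : ∀ x, f x ≠ ⊥) :
    ((∀ (n : ℕ) (p : Fin n → ℝ) (xs : Fin n → (Fin d → ℝ)),
        (∀ i, 0 ≤ p i) → ∑ i, p i = 1 →
        ((Sb S (∑ i, p i • xs i) (∑ i, p i • xs i) / 2 : ℝ) : EReal) ≤ wsum p xs f) ↔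
      (∀ x : Fin d → ℝ, ((Sb S x x / 2 : ℝ) : EReal) ≤ eclconv f x)) ∧
    ((∀ x : Fin d → ℝ, ((Sb S x x / 2 : ℝ) : EReal) ≤ eclconv f x) ↔
      (∃ G, MaxSMono S G ∧ ∀ y, fitz S G y ≤ f y)) := by
  have hab := le_eclconv_iff S f
  refine ⟨hab, hab.symm.trans ⟨exists_maxSMono_fitz_le hS hrank hbot, ?_⟩⟩
  rintro ⟨G, hG, hGf⟩ n p xs hp hp1
  exact le_wsum_of_fitz_le hS hG hGf hp hp1

end
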